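/- The combined Fourier transform of differential forms intertwines the de Rham differential with the Koszul differential: 𝓕 ∘ d = δ ∘ 𝓕 as maps from 𝒮(ℝ^n) ⊗ Λ((ℝ^n)*) to 𝒮((ℝ^n)*) ⊗ Λ(ℝ^n). -/

import Mathlib

/-!
STATEMENT 9.  Context: differential forms on `V = ℝⁿ` with Schwartz coefficients
are `Ωs = 𝒮(ℝⁿ, ℂ) ⊗ Λ(V*)` (generators `lamGen j = ψ^j = dz^j`), and on the dual
side `𝒮(V*, ℂ) ⊗ Λ(V)` (generators `ψ̄_j`); both exterior factors are modeled by
`Lam n`.  `dRham = Σ_j ∂/∂z^j ⊗ (ψ^j ∧ ·)` is the de Rham differential and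
`koszul = −Σ_j (b_j ·) ⊗ ι_j` the Koszul differential, where `ct j = ι_j` is the
odd derivation of `Λ(V)` with `ι_j ψ̄_i = δ_{ij}` (w.r.t. the parity `σΛ`).
The combined Fourier transform is `𝓕 = FT ⊗ 𝓕_Λ`, where
`FT f (b) = ∫ f(z) e^{i⟨b,z⟩} dz` and `𝓕_Λ(η) = ∫dψ (η · e^{i ψ̄_j ψ^j})` is the
Grassmann Fourier transform (via the Berezin integral `Ber` on `Egr n = Λ(V*⊕V)`,
characterized as in Statement 6, with `emb2` the embedding of the source exterior
algebra and `proj1` the projection onto the target one).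

Conclusion: `𝓕 ∘ d = δ ∘ 𝓕` as maps `𝒮(ℝⁿ) ⊗ Λ((ℝⁿ)*) → 𝒮((ℝⁿ)*) ⊗ Λ(ℝⁿ)`.
-/

open Finset

noncomputable section

/-- `Λ(V* ⊕ V)`, a model of the ℤ₂-graded tensor product `Λ(V*) ⊗ Λ(V)`. -/
abbrev Egr (n : ℕ) := ExteriorAlgebra ℂ ((Fin n → ℂ) × (Fin n → ℂ))

/-- The generators `ψ^a` of the `Λ(V)` factor. -/
def psv (n : ℕ) (a : Fin n) : Egr n := ExteriorAlgebra.ι ℂ (0, Pi.single a 1)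

/-- The generators `ψ̄_a` of the `Λ(V*)` factor. -/
def psb (n : ℕ) (a : Fin n) : Egr n := ExteriorAlgebra.ι ℂ (Pi.single a 1, 0)

/-- The top monomial `ψ^1 ∧ … ∧ ψ^n`. -/
def psvTop (n : ℕ) : Egr n := ((List.finRange n).map (psv n)).prod

/-- The subalgebra `Λ(V*) ⊆ Λ(V* ⊕ V)`. -/
def AlgD (n : ℕ) : Subalgebra ℂ (Egr n) := Algebra.adjoin ℂ (Set.range (psb n))

/-- The subspace `Λ¹(V) ⊆ Λ(V* ⊕ V)`; `(PV n) ^ k` is `Λ^k(V)`. -/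
def PV (n : ℕ) : Submodule ℂ (Egr n) := Submodule.span ℂ (Set.range (psv n))

/-- The Fourier kernel `e^{i ψ̄_j ⊗ ψ^j}`; the series terminates at the n-th power. -/
def fourierKernel (n : ℕ) : Egr n :=
  ∑ m ∈ range (n + 1),
    ((Nat.factorial m : ℂ))⁻¹ • (Complex.I • ∑ j, psb n j * psv n j) ^ m


/-- The exterior algebra `Λ` on an `n`-dimensional complex vector space
(modeling both `Λ(V*)` and `Λ(V)`). -/
abbrev Lam (n : ℕ) := ExteriorAlgebra ℂ (Fin n → ℂ)

/-- Its degree-1 generators. -/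
def lamGen (n : ℕ) (a : Fin n) : Lam n := ExteriorAlgebra.ι ℂ (Pi.single a 1)

/-- The embedding of `Lam n` as the second (integrated-over) factor of `Egr n`. -/
def emb2 (n : ℕ) : Lam n →ₐ[ℂ] Egr n :=
  ExteriorAlgebra.lift ℂ
    ⟨(ExteriorAlgebra.ι ℂ).comp (LinearMap.inr ℂ (Fin n → ℂ) (Fin n → ℂ)),
      fun _ => ExteriorAlgebra.ι_sq_zero _⟩

/-- The projection of `Egr n` onto its first factor `Lam n`. -/
def proj1 (n : ℕ) : Egr n →ₐ[ℂ] Lam n :=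
  ExteriorAlgebra.lift ℂ
    ⟨(ExteriorAlgebra.ι ℂ).comp (LinearMap.fst ℂ (Fin n → ℂ) (Fin n → ℂ)),
      fun _ => ExteriorAlgebra.ι_sq_zero _⟩

/-- The Grassmann Fourier transform `𝓕_Λ(η) = ∫dψ (η · e^{i ψ̄_j ψ^j})`,
as a linear map `Λ(V*) → Λ(V)`. -/
def grFourierL (n : ℕ) (Ber : Egr n →ₗ[ℂ] Egr n) : Lam n →ₗ[ℂ] Lam n :=
  (proj1 n).toLinearMap ∘ₗ Ber ∘ₗ
    (LinearMap.mulRight ℂ (fourierKernel n)) ∘ₗ (emb2 n).toLinearMap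

/-- Schwartz functions on `ℝⁿ` (with complex values). -/
abbrev Sch (n : ℕ) := SchwartzMap (Fin n → ℝ) ℂ

open scoped TensorProduct

/-- The de Rham differential `d(f ⊗ η) = Σ_j ∂f/∂z^j ⊗ ψ^j ∧ η` on
`𝒮(V) ⊗ Λ(V*)`. -/
def dRham (n : ℕ) (pd : Fin n → Sch n →ₗ[ℂ] Sch n) :
    Sch n ⊗[ℂ] Lam n →ₗ[ℂ] Sch n ⊗[ℂ] Lam n :=
  ∑ j, TensorProduct.map (pd j) (LinearMap.mulLeft ℂ (lamGen n j))

/-- The Koszul differential `δ(f ⊗ ψ̄_i) = −(b_i f) ⊗ 1`, i.e.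
`δ = −Σ_j (b_j ·) ⊗ ι_j`, on `𝒮(V*) ⊗ Λ(V)`. -/
def koszul (n : ℕ) (mulCoord : Fin n → Sch n →ₗ[ℂ] Sch n)
    (ct : Fin n → Lam n →ₗ[ℂ] Lam n) :
    Sch n ⊗[ℂ] Lam n →ₗ[ℂ] Sch n ⊗[ℂ] Lam n :=
  -∑ j, TensorProduct.map (mulCoord j) (ct j)

section ExtHelpers
variable {M : Type} [AddCommGroup M] [Module ℂ M]

/-- Left contraction on the exterior algebra. -/
def exC (d : Module.Dual ℂ M) : ExteriorAlgebra ℂ M →ₗ[ℂ] ExteriorAlgebra ℂ M :=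
  CliffordAlgebra.contractLeft (Q := (0 : QuadraticForm ℂ M)) d

/-- Parity involution on the exterior algebra. -/
def exS : ExteriorAlgebra ℂ M →ₐ[ℂ] ExteriorAlgebra ℂ M :=
  CliffordAlgebra.involute (Q := (0 : QuadraticForm ℂ M))

lemma exS_ι (m : M) : exS (ExteriorAlgebra.ι ℂ m) = -ExteriorAlgebra.ι ℂ m :=
  CliffordAlgebra.involute_ι m

lemma exC_ι_mul (d : Module.Dual ℂ M) (m : M) (x : ExteriorAlgebra ℂ M) :
    exC d (ExteriorAlgebra.ι ℂ m * x) = d m • x - ExteriorAlgebra.ι ℂ m * exC d x :=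
  CliffordAlgebra.contractLeft_ι_mul (Q := (0 : QuadraticForm ℂ M)) d m x

lemma exC_algebraMap (d : Module.Dual ℂ M) (r : ℂ) :
    exC d (algebraMap ℂ (ExteriorAlgebra ℂ M) r) = 0 :=
  CliffordAlgebra.contractLeft_algebraMap (0 : QuadraticForm ℂ M) d r

lemma exC_ι (d : Module.Dual ℂ M) (m : M) :
    exC d (ExteriorAlgebra.ι ℂ m) = algebraMap ℂ _ (d m) :=
  CliffordAlgebra.contractLeft_ι (0 : QuadraticForm ℂ M) d m

lemma ex_induction {P : ExteriorAlgebra ℂ M → Prop}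
    (h0 : ∀ r : ℂ, P (algebraMap ℂ _ r))
    (hadd : ∀ x y, P x → P y → P (x + y))
    (hmul : ∀ x m, P x → P (ExteriorAlgebra.ι ℂ m * x)) (x) : P x :=
  CliffordAlgebra.left_induction (Q := (0 : QuadraticForm ℂ M)) h0 hadd hmul x

lemma ι_anticomm (a b : M) : ExteriorAlgebra.ι ℂ a * ExteriorAlgebra.ι ℂ b
    = -(ExteriorAlgebra.ι ℂ b * ExteriorAlgebra.ι ℂ a) :=
  eq_neg_of_add_eq_zero_left (ExteriorAlgebra.ι_add_mul_swap a b)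

lemma exC_mul (d : Module.Dual ℂ M) (x y : ExteriorAlgebra ℂ M) :
    exC d (x * y) = exC d x * y + exS x * exC d y := by
  induction x using ex_induction with
  | h0 r => simp [exC_algebraMap, ← Algebra.smul_def]
  | hadd x z hx hz => simp only [add_mul, map_add, hx, hz]; abel
  | hmul x m hx =>
    rw [mul_assoc, exC_ι_mul, exC_ι_mul, hx, map_mul, exS_ι]
    simp only [mul_add, sub_mul, smul_mul_assoc, neg_mul, mul_assoc]
    abel

lemma ι_mul_eq (m : M) (x : ExteriorAlgebra ℂ M) :
    ExteriorAlgebra.ι ℂ m * x = exS x * ExteriorAlgebra.ι ℂ m := by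
  induction x using ex_induction with
  | h0 r => simp [Algebra.commutes]
  | hadd x z hx hz => simp only [add_mul, mul_add, map_add, hx, hz]
  | hmul x a hx =>
    rw [← mul_assoc, ι_anticomm, map_mul, exS_ι, neg_mul, neg_mul, neg_mul, mul_assoc, hx,
      mul_assoc]

lemma exS_mul_ι (m : M) (x : ExteriorAlgebra ℂ M) :
    exS x * ExteriorAlgebra.ι ℂ m = ExteriorAlgebra.ι ℂ m * x := (ι_mul_eq m x).symm

end ExtHelpers

/-- The functional `(v,w) ↦ v j`. -/
def dj (n : ℕ) (j : Fin n) : Module.Dual ℂ ((Fin n → ℂ) × (Fin n → ℂ)) :=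
  LinearMap.proj j ∘ₗ LinearMap.fst ℂ _ _

lemma dj_apply (n : ℕ) (j : Fin n) (p) : dj n j p = p.1 j := rfl

lemma emb2_ι (n : ℕ) (w : Fin n → ℂ) :
    emb2 n (ExteriorAlgebra.ι ℂ w) = ExteriorAlgebra.ι ℂ (0, w) := by
  simp [emb2]

lemma proj1_ι (n : ℕ) (p) :
    proj1 n (ExteriorAlgebra.ι ℂ p) = ExteriorAlgebra.ι ℂ p.1 := by
  simp [proj1]

lemma exC_emb2 (n : ℕ) (j : Fin n) (x : Lam n) : exC (dj n j) (emb2 n x) = 0 := by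
  induction x using ex_induction with
  | h0 r => rw [AlgHom.commutes, exC_algebraMap]
  | hadd x z hx hz => simp [hx, hz]
  | hmul x a hx => rw [map_mul, emb2_ι, exC_ι_mul, hx]; simp [dj_apply]

lemma proj1_exC (n : ℕ) (j : Fin n) (x : Egr n) :
    proj1 n (exC (dj n j) x) = exC (LinearMap.proj j) (proj1 n x) := by
  induction x using ex_induction with
  | h0 r => rw [AlgHom.commutes, exC_algebraMap, exC_algebraMap, map_zero]
  | hadd x z hx hz => simp [hx, hz]
  | hmul x a hx =>
    rw [map_mul (proj1 n), exC_ι_mul, proj1_ι, exC_ι_mul, map_sub, map_mul (proj1 n), hx, map_smul,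
      proj1_ι]
    rfl

lemma lam_ι (n : ℕ) (v : Fin n → ℂ) : ExteriorAlgebra.ι ℂ v = ∑ i, v i • lamGen n i := by
  conv_lhs => rw [pi_eq_sum_univ' v]
  simp [lamGen, map_sum]

lemma egr_ι1 (n : ℕ) (v : Fin n → ℂ) :
    ExteriorAlgebra.ι ℂ ((v, 0) : (Fin n → ℂ) × (Fin n → ℂ)) = ∑ i, v i • psb n i := by
  have : ((v, 0) : (Fin n → ℂ) × (Fin n → ℂ)) = LinearMap.inl ℂ _ _ v := rfl
  rw [this]
  conv_lhs => rw [pi_eq_sum_univ' v]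
  simp only [map_sum, map_smul]
  rfl

lemma egr_ι2 (n : ℕ) (v : Fin n → ℂ) :
    ExteriorAlgebra.ι ℂ ((0, v) : (Fin n → ℂ) × (Fin n → ℂ)) = ∑ i, v i • psv n i := by
  have : ((0, v) : (Fin n → ℂ) × (Fin n → ℂ)) = LinearMap.inr ℂ _ _ v := rfl
  rw [this]
  conv_lhs => rw [pi_eq_sum_univ' v]
  simp only [map_sum, map_smul]
  rfl

lemma ct_eq (n : ℕ) (σΛ : Lam n →ₗ[ℂ] Lam n)
    (hσ_one : σΛ 1 = 1) (hσ_gen : ∀ i, σΛ (lamGen n i) = -lamGen n i)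
    (ct : Fin n → Lam n →ₗ[ℂ] Lam n)
    (hct_der : ∀ j x y, ct j (x * y) = ct j x * y + σΛ x * ct j y)
    (hct_gen : ∀ j i, ct j (lamGen n i) = if i = j then 1 else 0) (j : Fin n) (x : Lam n) :
    ct j x = exC (LinearMap.proj j) x := by
  have h1 : ct j 1 = 0 := by
    have := hct_der j 1 1
    rw [hσ_one] at this
    simpa using this
  induction x using ex_induction with
  | h0 r => rw [exC_algebraMap, Algebra.algebraMap_eq_smul_one, map_smul, h1, smul_zero]
  | hadd x z hx hz => simp [hx, hz]
  | hmul x a hx =>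
    have hs : σΛ (ExteriorAlgebra.ι ℂ a) = -ExteriorAlgebra.ι ℂ a := by
      simp [lam_ι, hσ_gen]
    have hc : ct j (ExteriorAlgebra.ι ℂ a) = algebraMap ℂ _ (a j) := by
      simp [lam_ι, hct_gen, Algebra.algebraMap_eq_smul_one]
    rw [hct_der, exC_ι_mul, hs, hc, hx, ← Algebra.smul_def, neg_mul, sub_eq_add_neg]
    rfl

lemma AlgD_ι (n : ℕ) (v : Fin n → ℂ) :
    ExteriorAlgebra.ι ℂ ((v, 0) : (Fin n → ℂ) × (Fin n → ℂ)) ∈ AlgD n := by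
  rw [egr_ι1]
  exact sum_mem fun i _ => (AlgD n).smul_mem (Algebra.subset_adjoin ⟨i, rfl⟩) _

lemma PV_ι (n : ℕ) (v : Fin n → ℂ) :
    ExteriorAlgebra.ι ℂ ((0, v) : (Fin n → ℂ) × (Fin n → ℂ)) ∈ PV n := by
  rw [egr_ι2]
  exact sum_mem fun i _ => (PV n).smul_mem _ (Submodule.subset_span ⟨i, rfl⟩)

lemma AlgD_exS (n : ℕ) (x : Egr n) (hx : x ∈ AlgD n) : exS x ∈ AlgD n := by
  induction hx using Algebra.adjoin_induction with
  | mem x hx =>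
    obtain ⟨i, rfl⟩ := hx
    rw [psb, exS_ι]
    exact neg_mem (AlgD_ι n _)
  | algebraMap r => rw [AlgHom.commutes]; exact (AlgD n).algebraMap_mem r
  | add x y _ _ hx hy => rw [map_add]; exact add_mem hx hy
  | mul x y _ _ hx hy => rw [map_mul]; exact mul_mem hx hy

lemma AlgD_exC (n : ℕ) (d) (x : Egr n) (hx : x ∈ AlgD n) : exC d x ∈ AlgD n := by
  induction hx using Algebra.adjoin_induction with
  | mem x hx =>
    obtain ⟨i, rfl⟩ := hx
    rw [psb, exC_ι]
    exact (AlgD n).algebraMap_mem _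
  | algebraMap r => rw [exC_algebraMap]; exact zero_mem _
  | add x y _ _ hx hy => rw [map_add]; exact add_mem hx hy
  | mul x y hx' hy' hx hy =>
    rw [exC_mul]; exact add_mem (mul_mem hx hy') (mul_mem (AlgD_exS n x hx') hy)

lemma PV_exC (n : ℕ) (j : Fin n) (k : ℕ) (y : Egr n) (hy : y ∈ (PV n) ^ k) :
    exC (dj n j) y = 0 := by
  refine Submodule.pow_induction_on_left (PV n) (C := fun y => exC (dj n j) y = 0)
    (fun r => exC_algebraMap _ r) (fun x y hx hy => by simp [hx, hy]) (fun m hm x hx => ?_) hy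
  have hm0 : exC (dj n j) m = 0 := by
    induction hm using Submodule.span_induction with
    | mem x hx => obtain ⟨i, rfl⟩ := hx; rw [psv, exC_ι]; simp [dj_apply]
    | zero => simp
    | add x y _ _ hx hy => simp [hx, hy]
    | smul a x _ hx => simp [hx]
  rw [exC_mul, hm0, hx]; simp

lemma PV_high (n : ℕ) (k : ℕ) (hk : n ≤ k) (y : Egr n) (hy : y ∈ (PV n) ^ k) :
    (k = n ∧ ∃ c : ℂ, y = c • psvTop n) ∨ y = 0 := by
  have key : ∀ f : Fin k → Fin n, (k = n ∧ ∃ c : ℂ,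
      (List.ofFn fun i => psv n (f i)).prod = c • psvTop n) ∨
      (List.ofFn fun i => psv n (f i)).prod = 0 := by
    intro f
    have e : (List.ofFn fun i => psv n (f i)).prod = ExteriorAlgebra.ιMulti ℂ k
        (fun i => ((0, Pi.single (f i) 1) : (Fin n → ℂ) × (Fin n → ℂ))) := by
      rw [ExteriorAlgebra.ιMulti_apply]; rfl
    by_cases hf : Function.Injective f
    · have hkn : k = n := le_antisymm (by simpa using Fintype.card_le_of_injective f hf) hk
      subst hkn
      left
      refine ⟨rfl, ?_⟩
      have hb : Function.Bijective f := Finite.injective_iff_bijective.mp hf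
      let σ : Equiv.Perm (Fin k) := Equiv.ofBijective f hb
      have hp := (ExteriorAlgebra.ιMulti ℂ k).map_perm
        (fun i => ((0, Pi.single i 1) : (Fin k → ℂ) × (Fin k → ℂ))) σ
      have ht : psvTop k = ExteriorAlgebra.ιMulti ℂ k
        (fun i => ((0, Pi.single i 1) : (Fin k → ℂ) × (Fin k → ℂ))) := by
        rw [ExteriorAlgebra.ιMulti_apply, psvTop, List.ofFn_eq_map]; rfl
      refine ⟨((Equiv.Perm.sign σ : ℤ) : ℂ), ?_⟩
      rw [e, ht, Int.cast_smul_eq_zsmul]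
      exact hp
    · right
      rw [e]
      apply AlternatingMap.map_eq_zero_of_not_injective
      intro h
      apply hf
      intro a b hab
      apply h
      simp [hab]
  rw [PV, Submodule.span_pow] at hy
  by_cases hkn : k = n
  · left
    refine ⟨hkn, ?_⟩
    induction hy using Submodule.span_induction with
    | mem x hx =>
      obtain ⟨f, rfl⟩ := Set.mem_pow.mp hx
      choose g hg using fun i => (f i).2
      simp only [← hg]
      rcases key g with h | h
      · exact h.2
      · exact ⟨0, by rw [h, zero_smul]⟩
    | zero => exact ⟨0, by simp⟩
    | add x y _ _ hx hy =>
      obtain ⟨a, rfl⟩ := hx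
      obtain ⟨b, rfl⟩ := hy
      exact ⟨a + b, by rw [add_smul]⟩
    | smul a x _ hx =>
      obtain ⟨b, rfl⟩ := hx
      exact ⟨a * b, by rw [mul_smul]⟩
  · right
    induction hy using Submodule.span_induction with
    | mem x hx =>
      obtain ⟨f, rfl⟩ := Set.mem_pow.mp hx
      choose g hg using fun i => (f i).2
      simp only [← hg]
      rcases key g with h | h
      · exact absurd h.1 hkn
      · exact h
    | zero => rfl
    | add x y _ _ hx hy => simp [hx, hy]
    | smul a x _ hx => simp [hx]

lemma egr_span (n : ℕ) (x : Egr n) :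
    x ∈ Submodule.span ℂ {z : Egr n | ∃ ξ ∈ AlgD n, ∃ k, ∃ y ∈ (PV n) ^ k, z = ξ * y} := by
  induction x using ex_induction with
  | h0 r =>
    refine Submodule.subset_span ⟨algebraMap ℂ _ r, (AlgD n).algebraMap_mem r, 0, 1, ?_, by simp⟩
    simp
  | hadd x z hx hz => exact add_mem hx hz
  | hmul x m hx =>
    have hm : m = (m.1, 0) + (0, m.2) := by simp
    induction hx using Submodule.span_induction with
    | mem x hx =>
      obtain ⟨ξ, hξ, k, y, hy, rfl⟩ := hx
      rw [hm, map_add, add_mul]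
      refine add_mem ?_ ?_
      · exact Submodule.subset_span ⟨_, mul_mem (AlgD_ι n m.1) hξ, k, y, hy, by rw [mul_assoc]⟩
      · refine Submodule.subset_span ⟨_, AlgD_exS n ξ hξ, k + 1,
          ExteriorAlgebra.ι ℂ (0, m.2) * y, ?_, ?_⟩
        · rw [pow_succ']
          exact Submodule.mul_mem_mul (PV_ι n _) hy
        · rw [← mul_assoc, ι_mul_eq, mul_assoc]
    | zero => simp
    | add x y _ _ hx hy => rw [mul_add]; exact add_mem hx hy
    | smul a x _ hx => rw [mul_smul_comm]; exact Submodule.smul_mem _ _ hx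

lemma Ber_exC (n : ℕ) (Ber : Egr n →ₗ[ℂ] Egr n)
    (hBer_top : ∀ ξ ∈ AlgD n, Ber (ξ * psvTop n) = ξ)
    (hBer_low : ∀ ξ ∈ AlgD n, ∀ k < n, ∀ y ∈ ((PV n) ^ k : Submodule ℂ (Egr n)),
      Ber (ξ * y) = 0) (j : Fin n) (x : Egr n) :
    Ber (exC (dj n j) x) = exC (dj n j) (Ber x) := by
  have hx := egr_span n x
  induction hx using Submodule.span_induction with
  | mem x hx =>
    obtain ⟨ξ, hξ, k, y, hy, rfl⟩ := hx
    have h := AlgD_exC n (dj n j) ξ hξ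
    rw [exC_mul, PV_exC n j k y hy, mul_zero, add_zero]
    rcases lt_or_ge k n with hk | hk
    · rw [hBer_low _ h k hk y hy, hBer_low _ hξ k hk y hy, map_zero]
    · rcases PV_high n k hk y hy with ⟨-, c, rfl⟩ | rfl
      · simp only [mul_smul_comm, map_smul, hBer_top _ h, hBer_top _ hξ]
      · simp
  | zero => simp
  | add x y _ _ hx hy => simp [hx, hy]
  | smul a x _ hx => simp [hx]

/-- The exponent of the Fourier kernel. -/
def kerK (n : ℕ) : Egr n := Complex.I • ∑ j, psb n j * psv n j

lemma bv_S (n : ℕ) (j : Fin n) : exS (psb n j * psv n j) = psb n j * psv n j := by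
  simp [psb, psv, exS_ι]

lemma kerK_S (n : ℕ) : exS (kerK n) = kerK n := by
  simp only [kerK, map_smul, map_sum, bv_S]

lemma kerK_C (n : ℕ) (j : Fin n) : exC (dj n j) (kerK n) = Complex.I • psv n j := by
  rw [kerK, map_smul, map_sum]
  congr 1
  rw [Finset.sum_eq_single j]
  · rw [psb, exC_ι_mul, psv, exC_ι]; simp [dj_apply]
  · intro b _ hb
    rw [psb, exC_ι_mul, psv, exC_ι]; simp [dj_apply, Pi.single_apply, hb.symm]
  · simp

lemma psv_kerK (n : ℕ) (j : Fin n) : Commute (psv n j) (kerK n) := by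
  have := ι_mul_eq ((0, Pi.single j 1) : (Fin n → ℂ) × (Fin n → ℂ)) (kerK n)
  rw [kerK_S] at this
  exact this

lemma bv_comm (n : ℕ) (j : Fin n) (x : Egr n) : Commute (psb n j * psv n j) x := by
  show psb n j * psv n j * x = x * (psb n j * psv n j)
  have h2 := fun x => exS_mul_ι ((0, Pi.single j 1) : (Fin n → ℂ) × (Fin n → ℂ)) x
  have h1 := fun x => exS_mul_ι ((Pi.single j 1, 0) : (Fin n → ℂ) × (Fin n → ℂ)) x
  have hi : exS (exS x) = x := CliffordAlgebra.involute_involute _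
  rw [psb, psv, mul_assoc, ← h2, ← mul_assoc, ← h1, hi, mul_assoc]

lemma bv_sq (n : ℕ) (j : Fin n) : (psb n j * psv n j) ^ 2 = 0 := by
  rw [sq, mul_assoc, ← mul_assoc (psv n j), psv, psb, ι_anticomm, neg_mul, mul_neg, ← mul_assoc,
    ← mul_assoc, ExteriorAlgebra.ι_sq_zero]
  simp

lemma bv_sum (n : ℕ) (s : Finset (Fin n)) : (∑ j ∈ s, psb n j * psv n j) ^ (s.card + 1) = 0 := by
  induction s using Finset.induction_on with
  | empty => simp
  | insert a s ha ih =>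
    rw [Finset.sum_insert ha, Finset.card_insert_of_notMem ha]
    exact (bv_comm n a _).add_pow_eq_zero_of_add_le_succ_of_pow_eq_zero (bv_sq n a) ih (by omega)

lemma kerK_pow (n : ℕ) : kerK n ^ (n + 1) = 0 := by
  have := bv_sum n Finset.univ
  rw [Finset.card_univ, Fintype.card_fin] at this
  rw [kerK, smul_pow, this, smul_zero]

lemma kerK_pow_C (n : ℕ) (j : Fin n) (m : ℕ) :
    exC (dj n j) (kerK n ^ (m + 1)) = ((m : ℂ) + 1) • Complex.I • (psv n j * kerK n ^ m) := by
  induction m with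
  | zero => simp [kerK_C]
  | succ m ih =>
    have hc : kerK n * (psv n j * kerK n ^ m) = psv n j * kerK n ^ (m + 1) := by
      rw [← mul_assoc, ← (psv_kerK n j).eq, mul_assoc, pow_succ']
    rw [pow_succ', exC_mul, kerK_C, kerK_S, ih, mul_smul_comm, mul_smul_comm, hc, smul_mul_assoc]
    push_cast
    module

lemma kernel_C (n : ℕ) (j : Fin n) :
    exC (dj n j) (fourierKernel n) = Complex.I • (psv n j * fourierKernel n) := by
  have hlast : psv n j * kerK n ^ n = 0 := by
    have := kerK_pow_C n j n
    rw [kerK_pow, map_zero] at this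
    have h2 := this.symm
    rw [smul_eq_zero_iff_right (by exact_mod_cast Nat.succ_ne_zero n),
      smul_eq_zero_iff_right Complex.I_ne_zero] at h2
    exact h2
  have hk : fourierKernel n = ∑ m ∈ range (n + 1), ((Nat.factorial m : ℂ))⁻¹ • kerK n ^ m := rfl
  rw [hk]
  conv_lhs => rw [Finset.sum_range_succ']
  conv_rhs => rw [Finset.sum_range_succ]
  have h1 : exC (dj n j) (1 : Egr n) = 0 := by
    have := exC_algebraMap (dj n j) 1
    rwa [map_one] at this
  rw [map_add, map_smul, pow_zero, h1, smul_zero, add_zero, mul_add, mul_smul_comm, hlast,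
    smul_zero, add_zero, map_sum, Finset.mul_sum, Finset.smul_sum]
  refine Finset.sum_congr rfl fun m _ => ?_
  rw [map_smul, kerK_pow_C, mul_smul_comm, smul_smul, smul_comm Complex.I]
  congr 1
  have : (m : ℂ) + 1 ≠ 0 := by exact_mod_cast Nat.succ_ne_zero m
  have h3 : (Nat.factorial m : ℂ) ≠ 0 := by exact_mod_cast Nat.factorial_ne_zero m
  rw [Nat.factorial_succ]
  push_cast
  field_simp

lemma grFourier_C (n : ℕ) (Ber : Egr n →ₗ[ℂ] Egr n)
    (hBer_top : ∀ ξ ∈ AlgD n, Ber (ξ * psvTop n) = ξ)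
    (hBer_low : ∀ ξ ∈ AlgD n, ∀ k < n, ∀ y ∈ ((PV n) ^ k : Submodule ℂ (Egr n)),
      Ber (ξ * y) = 0) (j : Fin n) (η : Lam n) :
    exC (LinearMap.proj j) (grFourierL n Ber η)
      = Complex.I • grFourierL n Ber (lamGen n j * η) := by
  have e : ∀ η, grFourierL n Ber η = proj1 n (Ber (emb2 n η * fourierKernel n)) := fun _ => rfl
  rw [e, e, ← proj1_exC, ← Ber_exC n Ber hBer_top hBer_low, exC_mul, exC_emb2, zero_mul, zero_add,
    kernel_C, mul_smul_comm, map_smul, map_smul, ← mul_assoc, map_mul (emb2 n), lamGen, emb2_ι, psv,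
    exS_mul_ι]

lemma FT_pd (n : ℕ) (pd : Fin n → Sch n →ₗ[ℂ] Sch n)
    (hpd : ∀ j (f : Sch n) (z : Fin n → ℝ), pd j f z = fderiv ℝ (⇑f) z (Pi.single j 1))
    (mulCoord : Fin n → Sch n →ₗ[ℂ] Sch n)
    (hmc : ∀ j (f : Sch n) (b : Fin n → ℝ), mulCoord j f b = (b j : ℂ) * f b)
    (FT : Sch n →ₗ[ℂ] Sch n)
    (hFT : ∀ (f : Sch n) (b : Fin n → ℝ),
      FT f b = ∫ z : Fin n → ℝ, Complex.exp (Complex.I * ∑ j, (b j : ℂ) * (z j : ℂ)) * f z)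
    (j : Fin n) (f : Sch n) : FT (pd j f) = (-Complex.I) • mulCoord j (FT f) := by
  ext b
  rw [smul_apply, hmc, hFT, hFT]
  simp only [hpd]
  let L : (Fin n → ℝ) →L[ℝ] ℂ :=
    ∑ i, (b i : ℂ) • (Complex.ofRealCLM ∘L ContinuousLinearMap.proj i)
  have hL : ∀ z, L z = ∑ i, (b i : ℂ) * (z i : ℂ) := by
    intro z
    simp [L]
  let g : (Fin n → ℝ) → ℂ := fun z => Complex.exp (Complex.I * ∑ i, (b i : ℂ) * (z i : ℂ))
  have hg : ∀ z, HasFDerivAt g (g z • Complex.I • L) z := by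
    intro z
    have h := ((L.hasFDerivAt (x := z)).const_mul Complex.I).cexp
    simpa only [hL] using h
  have hgd : ∀ z, fderiv ℝ g z (Pi.single j 1) = (Complex.I * b j) * g z := by
    intro z
    rw [(hg z).fderiv]
    have hLj : L (Pi.single j 1) = b j := by
      rw [hL]; simp [Pi.single_apply, apply_ite Complex.ofReal]
    have : (g z • Complex.I • L) (Pi.single j 1) = g z * (Complex.I * L (Pi.single j 1)) := rfl
    rw [this, hLj]
    ring
  have hgc : Continuous g := continuous_iff_continuousAt.2 fun z => (hg z).continuousAt
  have hgn : ∀ z, ‖g z‖ ≤ 1 := by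
    intro z
    have : Complex.I * ∑ i, (b i : ℂ) * (z i : ℂ) = ((∑ i, b i * z i : ℝ) : ℂ) * Complex.I := by
      push_cast; ring
    simp only [g]
    rw [this, Complex.norm_exp_ofReal_mul_I]
  have hint : ∀ h : Sch n, MeasureTheory.Integrable (fun z => g z * h z) := fun h =>
    h.integrable.bdd_mul hgc.aestronglyMeasurable (Filter.Eventually.of_forall hgn)
  have hmain := integral_mul_fderiv_eq_neg_fderiv_mul_of_integrable
    (μ := MeasureTheory.volume) (f := g) (g := f) (v := Pi.single j 1)
    (by simp only [hgd, mul_assoc]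
        simp only [← mul_assoc (Complex.I)]
        exact (hint f).const_mul _)
    (by simpa only [hpd] using hint (pd j f)) (hint f)
    (fun z _ => (hg z).differentiableAt) (fun z _ => f.differentiableAt)
  refine hmain.trans ?_
  simp only [hgd, mul_assoc, MeasureTheory.integral_const_mul, smul_eq_mul]
  simp only [g, neg_mul]

theorem statement9 {n : ℕ}
    -- the Berezin integral defining the Grassmann Fourier transform
    (Ber : Egr n →ₗ[ℂ] Egr n)
    (hBer_top : ∀ ξ ∈ AlgD n, Ber (ξ * psvTop n) = ξ)
    (hBer_low : ∀ ξ ∈ AlgD n, ∀ k < n, ∀ y ∈ ((PV n) ^ k : Submodule ℂ (Egr n)),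
      Ber (ξ * y) = 0)
    -- the partial derivatives ∂/∂z^j on Schwartz space
    (pd : Fin n → Sch n →ₗ[ℂ] Sch n)
    (hpd : ∀ j (f : Sch n) (z : Fin n → ℝ), pd j f z = fderiv ℝ (⇑f) z (Pi.single j 1))
    -- multiplication by the coordinates b_j on Schwartz space
    (mulCoord : Fin n → Sch n →ₗ[ℂ] Sch n)
    (hmc : ∀ j (f : Sch n) (b : Fin n → ℝ), mulCoord j f b = (b j : ℂ) * f b)
    -- the Fourier transform f̂(b) = ∫ f(z) e^{i⟨b,z⟩} dz on Schwartz space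
    (FT : Sch n →ₗ[ℂ] Sch n)
    (hFT : ∀ (f : Sch n) (b : Fin n → ℝ),
      FT f b = ∫ z : Fin n → ℝ, Complex.exp (Complex.I * ∑ j, (b j : ℂ) * (z j : ℂ)) * f z)
    -- the parity involution of Λ(V) and the contractions ι_j dual to the ψ̄_j
    (σΛ : Lam n →ₗ[ℂ] Lam n) (hσ_mul : ∀ x y, σΛ (x * y) = σΛ x * σΛ y)
    (hσ_one : σΛ 1 = 1) (hσ_gen : ∀ i, σΛ (lamGen n i) = -lamGen n i)
    (ct : Fin n → Lam n →ₗ[ℂ] Lam n)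
    (hct_der : ∀ j x y, ct j (x * y) = ct j x * y + σΛ x * ct j y)
    (hct_gen : ∀ j i, ct j (lamGen n i) = if i = j then 1 else 0) :
    -- Conclusion: 𝓕 ∘ d = δ ∘ 𝓕.
    TensorProduct.map FT (grFourierL n Ber) ∘ₗ dRham n pd
      = koszul n mulCoord ct ∘ₗ TensorProduct.map FT (grFourierL n Ber) := by

  apply TensorProduct.ext'
  intro f η
  simp only [LinearMap.comp_apply, dRham, koszul, LinearMap.sum_apply, LinearMap.neg_apply,
    TensorProduct.map_tmul, map_sum, LinearMap.mulLeft_apply]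
  rw [← Finset.sum_neg_distrib]
  refine Finset.sum_congr rfl fun j _ => ?_
  rw [FT_pd n pd hpd mulCoord hmc FT hFT, ct_eq n σΛ hσ_one hσ_gen ct hct_der hct_gen,
    grFourier_C n Ber hBer_top hBer_low, TensorProduct.smul_tmul, neg_smul, TensorProduct.tmul_neg]
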